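/- For a smooth function f: ℝ×𝕋² → ℂ satisfying f(x+1,y,t+y) = f(x,y,t), 1-periodicity in y and t, and (2πi)^{-1}∂_t f = n·f with n ≠ 0, there is a unique function f̃: ℝ×ℤ/nℤ → ℂ such that f(x,y,t) = Σ_{k∈ℤ} f̃(x + k/n; k) e^{2πi(ky+nt)} (Weil–Brezin–Zak transform), and the assignment f ↦ f̃ is a linear bijection onto the Schwartz functions on ℝ×ℤ/nℤ. -/

import Mathlib

namespace WBZ

open Complex MeasureTheory

noncomputable def ee (r : ℝ) : ℂ := Complex.exp (2 * Real.pi * Complex.I * r)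

lemma ee_add (a b : ℝ) : ee (a + b) = ee a * ee b := by
  unfold ee; rw [← Complex.exp_add]; push_cast; ring_nf

lemma ee_int (k : ℤ) : ee k = 1 := by
  unfold ee
  rw [Complex.exp_eq_one_iff]
  exact ⟨k, by push_cast; ring⟩

lemma ee_zero : ee 0 = 1 := by simp [ee]

lemma norm_ee (a : ℝ) : ‖ee a‖ = 1 := by
  unfold ee
  rw [show (2 * Real.pi * Complex.I * a : ℂ) = ((2 * Real.pi * a : ℝ) : ℂ) * Complex.I by
    push_cast; ring]
  exact Complex.norm_exp_ofReal_mul_I _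

lemma contDiff_ee {m : WithTop ℕ∞} : ContDiff ℝ m ee := by
  unfold ee
  exact (contDiff_const.mul Complex.ofRealCLM.contDiff).cexp

lemma continuous_ee : Continuous ee := contDiff_ee (m := 0) |>.continuous

lemma hasDerivAt_ee (c y : ℝ) :
    HasDerivAt (fun s : ℝ => ee (c * s)) (2 * Real.pi * Complex.I * c * ee (c * y)) y := by
  unfold ee
  have h : HasDerivAt (fun s : ℝ => (2 * Real.pi * Complex.I * ((c * s : ℝ) : ℂ)))
      (2 * Real.pi * Complex.I * ((c : ℝ) : ℂ)) y := by
    have := ((hasDerivAt_id y).const_mul c).ofReal_comp.const_mul (2 * Real.pi * Complex.I : ℂ)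
    simpa using this
  convert h.cexp using 1
  ring

lemma summ : Summable fun k : ℤ => 1 / (1 + |(k : ℝ)|) ^ 2 := by
  refine Summable.of_norm_bounded_eventually
    (g := fun k : ℤ => 1 / (k : ℝ) ^ 2) (Real.summable_one_div_int_pow.2 one_lt_two) ?_
  have : ∀ᶠ k : ℤ in Filter.cofinite, k ≠ 0 := by
    rw [Filter.eventually_cofinite]; simp
  filter_upwards [this] with k hk
  rw [Real.norm_of_nonneg (by positivity), ← sq_abs (k : ℝ)]
  have : 0 < |(k : ℝ)| := by positivity
  gcongr
  linarith

lemma unif0 {n : ℤ} (hn : n ≠ 0) {g : ℤ → SchwartzMap ℝ ℂ} (hg : ∀ k : ℤ, g (k + n) = g k) :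
    ∃ C : ℝ, 0 ≤ C ∧ ∀ k u, (1 + |u|) ^ 3 * ‖g k u‖ ≤ C := by
  have h1 : ∀ k, ∃ C : ℝ, 0 ≤ C ∧ ∀ u, (1 + |u|) ^ 3 * ‖g k u‖ ≤ C := by
    intro k
    refine ⟨2 ^ 3 * (Finset.Iic (3, 0)).sup (fun m => SchwartzMap.seminorm ℝ m.1 m.2) (g k),
      by positivity, fun u => ?_⟩
    simpa using SchwartzMap.one_add_le_sup_seminorm_apply (𝕜 := ℝ) (m := (3, 0)) (k := 3) (n := 0)
      le_rfl le_rfl (g k) u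
  choose C hC0 hC using h1
  refine ⟨∑ k ∈ Finset.Ico 0 |n|, C k, Finset.sum_nonneg fun k _ => hC0 k, fun k u => ?_⟩
  have hk : g k = g (k % n) := by
    have hp : Function.Periodic g n := hg
    have := (hp.int_mul (k / n)) (k % n)
    rw [← this]
    congr 1
    have := Int.emod_add_mul_ediv k n
    push_cast
    linarith
  rw [hk]
  refine (hC _ u).trans (Finset.single_le_sum (f := C) (fun k _ => hC0 k) ?_)
  simp [Int.emod_nonneg k hn, Int.emod_lt_abs k hn]

lemma unif {n : ℤ} (hn : n ≠ 0) {g : ℤ → SchwartzMap ℝ ℂ} (hg : ∀ k : ℤ, g (k + n) = g k)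
    (R : ℝ) (hR : 0 ≤ R) : ∃ C : ℝ, 0 ≤ C ∧ ∀ (k : ℤ) (x : ℝ), |x| ≤ R →
      (1 + |(k : ℝ)|) * ‖g k (x + k / n)‖ ≤ C * (1 / (1 + |(k : ℝ)|) ^ 2) := by
  obtain ⟨C, hC0, hC⟩ := unif0 hn hg
  refine ⟨(|(n : ℝ)| * (1 + R)) ^ 3 * C, by positivity, fun k x hx => ?_⟩
  have hn1 : (1 : ℝ) ≤ |(n : ℝ)| := by exact_mod_cast Int.one_le_abs hn
  have hn' : (n : ℝ) ≠ 0 := by exact_mod_cast hn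
  set u : ℝ := x + k / n with hu
  have hk : (k : ℝ) = n * (u - x) := by rw [hu]; field_simp; ring
  have hk1 : 1 + |(k : ℝ)| ≤ |(n : ℝ)| * (1 + R) * (1 + |u|) := by
    have h2 : |(k : ℝ)| ≤ |(n : ℝ)| * (|u| + R) := by
      rw [hk, abs_mul]
      gcongr
      exact (abs_sub _ _).trans (by linarith)
    have : 0 ≤ |(n : ℝ)| * (R * |u|) := by positivity
    nlinarith
  rw [mul_one_div, le_div_iff₀ (by positivity)]
  calc _ = (1 + |(k : ℝ)|) ^ 3 * ‖g k u‖ := by ring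
    _ ≤ (|(n : ℝ)| * (1 + R) * (1 + |u|)) ^ 3 * ‖g k u‖ := by gcongr
    _ = (|(n : ℝ)| * (1 + R)) ^ 3 * ((1 + |u|) ^ 3 * ‖g k u‖) := by ring
    _ ≤ _ := by gcongr; exact hC k u

lemma unif' {n : ℤ} (hn : n ≠ 0) {g : ℤ → SchwartzMap ℝ ℂ} (hg : ∀ k : ℤ, g (k + n) = g k)
    (R : ℝ) (hR : 0 ≤ R) : ∃ C : ℝ, 0 ≤ C ∧ ∀ (k : ℤ) (x : ℝ), |x| ≤ R →
      ‖g k (x + k / n)‖ ≤ C * (1 / (1 + |(k : ℝ)|) ^ 2) := by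
  obtain ⟨C, h0, h⟩ := unif hn hg R hR
  refine ⟨C, h0, fun k x hx => le_trans ?_ (h k x hx)⟩
  nlinarith [norm_nonneg (g k (x + k / n)), abs_nonneg (k : ℝ)]

lemma summ_g {n : ℤ} (hn : n ≠ 0) {g : ℤ → SchwartzMap ℝ ℂ} (hg : ∀ k : ℤ, g (k + n) = g k)
    (x : ℝ) : Summable fun k : ℤ => ‖g k (x + k / n)‖ := by
  obtain ⟨C, h0, h⟩ := unif' hn hg |x| (abs_nonneg x)
  exact Summable.of_nonneg_of_le (fun _ => norm_nonneg _) (fun k => h k x le_rfl)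
    (summ.mul_left C)

lemma summ_gee {n : ℤ} (hn : n ≠ 0) {g : ℤ → SchwartzMap ℝ ℂ} (hg : ∀ k : ℤ, g (k + n) = g k)
    (x y : ℝ) : Summable fun k : ℤ => g k (x + k / n) * ee (k * y) := by
  refine Summable.of_norm ?_
  simpa [norm_ee] using summ_g hn hg x

noncomputable def Fs (n : ℤ) (g : ℤ → SchwartzMap ℝ ℂ) (p : ℝ × ℝ) : ℂ :=
  ∑' k : ℤ, g k (p.1 + k / n) * ee (k * p.2)

noncomputable def L1 : ℝ × ℝ →L[ℝ] ℂ := Complex.ofRealCLM.comp (ContinuousLinearMap.fst ℝ ℝ ℝ)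
noncomputable def L2 : ℝ × ℝ →L[ℝ] ℂ := Complex.ofRealCLM.comp (ContinuousLinearMap.snd ℝ ℝ ℝ)

noncomputable def Dg (g : ℤ → SchwartzMap ℝ ℂ) (k : ℤ) : SchwartzMap ℝ ℂ :=
  SchwartzMap.derivCLM ℝ ℂ (g k)
noncomputable def Mg (g : ℤ → SchwartzMap ℝ ℂ) (k : ℤ) : SchwartzMap ℝ ℂ :=
  SchwartzMap.smulLeftCLM ℂ (fun x : ℝ => x) (g k)

lemma Mg_apply (g : ℤ → SchwartzMap ℝ ℂ) (k : ℤ) (x : ℝ) : Mg g k x = x * g k x := by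
  unfold Mg
  rw [SchwartzMap.smulLeftCLM_apply_apply (by fun_prop)]
  simp

lemma norm_L1 : ‖L1‖ ≤ 1 := by
  refine ContinuousLinearMap.opNorm_le_bound _ zero_le_one fun p => ?_
  simpa [L1] using norm_fst_le p
lemma norm_L2 : ‖L2‖ ≤ 1 := by
  refine ContinuousLinearMap.opNorm_le_bound _ zero_le_one fun p => ?_
  simpa [L2] using norm_snd_le p

lemma hasFDerivAt_term (n : ℤ) (g : ℤ → SchwartzMap ℝ ℂ) (k : ℤ) (p : ℝ × ℝ) :
    HasFDerivAt (fun p : ℝ × ℝ => g k (p.1 + k / n) * ee (k * p.2))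
      ((Dg g k (p.1 + k / n) * ee (k * p.2)) • L1 +
        (2 * Real.pi * Complex.I * k * g k (p.1 + k / n) * ee (k * p.2)) • L2) p := by
  have h1 : HasFDerivAt (fun p : ℝ × ℝ => g k (p.1 + k / n)) (Dg g k (p.1 + k / n) • L1) p := by
    have ha : HasDerivAt (fun s : ℝ => g k (s + k / n)) (Dg g k (p.1 + k / n)) p.1 := by
      have := ((g k).differentiableAt (x := p.1 + k / n)).hasDerivAt
      exact this.comp_add_const p.1 (k / n : ℝ)
    refine (ha.hasFDerivAt.comp p (hasFDerivAt_fst (p := p))).congr_fderiv ?_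
    ext <;> simp [L1]
  have h2 : HasFDerivAt (fun p : ℝ × ℝ => ee (k * p.2))
      ((2 * Real.pi * Complex.I * k * ee (k * p.2)) • L2) p := by
    refine ((hasDerivAt_ee k p.2).hasFDerivAt.comp p (hasFDerivAt_snd (p := p))).congr_fderiv ?_
    ext <;> simp [L2]
  refine (h1.mul h2).congr_fderiv ?_
  ext <;> simp [L1, L2] <;> ring

lemma hasFDerivAt_Fs {n : ℤ} (hn : n ≠ 0) {g : ℤ → SchwartzMap ℝ ℂ}
    (hg : ∀ k : ℤ, g (k + n) = g k) (p : ℝ × ℝ) :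
    HasFDerivAt (Fs n g) (Fs n (Dg g) p • L1 +
      (2 * Real.pi * Complex.I * n * (Fs n (Mg g) p - p.1 * Fs n g p)) • L2) p := by
  have hD : ∀ k, Dg g (k + n) = Dg g k := fun k => by simp [Dg, hg]
  have hM : ∀ k, Mg g (k + n) = Mg g k := fun k => by simp [Mg, hg]
  have hn' : (n : ℂ) ≠ 0 := by exact_mod_cast hn
  set R := |p.1| + 1
  obtain ⟨C1, h10, h1⟩ := unif' hn hD R (by positivity)
  obtain ⟨C2, h20, h2⟩ := unif hn hg R (by positivity)
  have key := hasFDerivAt_tsum_of_isPreconnected (𝕜 := ℝ)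
    (f := fun (k : ℤ) (p : ℝ × ℝ) => g k (p.1 + k / n) * ee (k * p.2))
    (f' := fun (k : ℤ) (p : ℝ × ℝ) => (Dg g k (p.1 + k / n) * ee (k * p.2)) • L1 +
        (2 * Real.pi * Complex.I * k * g k (p.1 + k / n) * ee (k * p.2)) • L2)
    (u := fun k : ℤ => C1 * (1 / (1 + |(k : ℝ)|) ^ 2) +
      (2 * Real.pi) * (C2 * (1 / (1 + |(k : ℝ)|) ^ 2))) (s := Metric.ball p 1) (x₀ := p) (x := p)
    ((summ.mul_left C1).add ((summ.mul_left C2).mul_left _)) Metric.isOpen_ball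
    (convex_ball p 1).isPreconnected (fun k q _ => hasFDerivAt_term n g k q) ?_
    (Metric.mem_ball_self one_pos) (summ_gee hn hg p.1 p.2) (Metric.mem_ball_self one_pos)
  · refine key.congr_fderiv ?_
    apply HasSum.tsum_eq
    refine HasSum.add ((summ_gee hn hD p.1 p.2).hasSum.smul_const L1) (HasSum.smul_const ?_ L2)
    convert! (((summ_gee hn hM p.1 p.2).hasSum.sub
      ((summ_gee hn hg p.1 p.2).hasSum.mul_left (p.1 : ℂ))).mul_left
      (2 * Real.pi * Complex.I * n)) using 1
    ext k
    rw [Mg_apply]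
    push_cast
    field_simp
    ring
  · intro k q hq
    have hqR : |q.1| ≤ R := by
      have h3 : ‖q - p‖ < 1 := by simpa [dist_eq_norm] using hq
      have h4 : |q.1 - p.1| ≤ ‖q - p‖ := norm_fst_le (q - p)
      have := abs_sub_abs_le_abs_sub q.1 p.1
      simp only [R]; linarith
    refine (norm_add_le _ _).trans (add_le_add ?_ ?_)
    · rw [norm_smul, norm_mul, norm_ee, mul_one]
      refine le_trans ?_ (h1 k q.1 hqR)
      exact mul_le_of_le_one_right (norm_nonneg _) norm_L1
    · rw [norm_smul]
      refine (mul_le_of_le_one_right (norm_nonneg _) norm_L2).trans ?_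
      simp only [norm_mul, norm_ee, mul_one, Complex.norm_I, Complex.norm_intCast,
        Complex.norm_real, Complex.norm_ofNat, Real.norm_of_nonneg Real.pi_pos.le]
      rw [mul_assoc (2 * Real.pi)]
      refine mul_le_mul_of_nonneg_left (le_trans ?_ (h2 k q.1 hqR)) (by positivity)
      gcongr
      linarith

lemma contDiff_Fs {n : ℤ} (hn : n ≠ 0) (m : ℕ) : ∀ {g : ℤ → SchwartzMap ℝ ℂ},
    (∀ k : ℤ, g (k + n) = g k) → ContDiff ℝ m (Fs n g) := by
  induction m with
  | zero =>
    intro g hg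
    rw [Nat.cast_zero, contDiff_zero]
    exact continuous_iff_continuousAt.2 fun p => (hasFDerivAt_Fs hn hg p).continuousAt
  | succ m ih =>
    intro g hg
    have hD : ∀ k, Dg g (k + n) = Dg g k := fun k => by simp [Dg, hg]
    have hM : ∀ k, Mg g (k + n) = Mg g k := fun k => by simp [Mg, hg]
    rw [Nat.cast_succ, contDiff_succ_iff_hasFDerivAt]
    refine ⟨_, ?_, fun p => hasFDerivAt_Fs hn hg p⟩
    have h0 : ContDiff ℝ m (fun p : ℝ × ℝ => (p.1 : ℂ)) :=
      Complex.ofRealCLM.contDiff.comp contDiff_fst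
    exact ((ih hD).smul contDiff_const).add
      ((contDiff_const.mul ((ih hM).sub (h0.mul (ih hg)))).smul contDiff_const)

lemma term_eq (n k : ℤ) (c : ℂ) (y t : ℝ) :
    c * Complex.exp (2 * Real.pi * Complex.I * (k * y + n * t)) =
      (c * ee (k * y)) * ee (n * t) := by
  rw [mul_assoc c, ← ee_add]; unfold ee; push_cast; rfl

lemma tsum_eq (n : ℤ) (g : ℤ → SchwartzMap ℝ ℂ) (x y t : ℝ) :
    ∑' k : ℤ, g k (x + k / n) * Complex.exp (2 * Real.pi * Complex.I * (k * y + n * t)) =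
      Fs n g (x, y) * ee (n * t) := by
  simp_rw [term_eq]
  rw [tsum_mul_right]; rfl

theorem partB (n : ℤ) (hn : n ≠ 0) (g : ℤ → SchwartzMap ℝ ℂ) (hg : ∀ k : ℤ, g (k + n) = g k) :
      ∃ f : ℝ × ℝ × ℝ → ℂ, ContDiff ℝ (⊤ : ℕ∞) f ∧
        (∀ x y t : ℝ, f (x + 1, y, t + y) = f (x, y, t)) ∧
        (∀ x y t : ℝ, f (x, y + 1, t) = f (x, y, t)) ∧
        (∀ x y t : ℝ, f (x, y, t + 1) = f (x, y, t)) ∧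
        (∀ x y t : ℝ, deriv (fun s => f (x, y, s)) t =
          2 * Real.pi * Complex.I * n * f (x, y, t)) ∧
        ∀ x y t : ℝ, f (x, y, t) =
          ∑' k : ℤ, g k (x + k / n) * Complex.exp (2 * Real.pi * Complex.I * (k * y + n * t)) := by
  have hn' : (n : ℝ) ≠ 0 := by exact_mod_cast hn
  refine ⟨fun p => Fs n g (p.1, p.2.1) * ee (n * p.2.2), ?_, ?_, ?_, ?_, ?_, ?_⟩
  · have h1 : ContDiff ℝ (⊤ : ℕ∞) (Fs n g) := contDiff_infty.2 fun m => contDiff_Fs hn m hg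
    exact (h1.comp (by fun_prop)).mul (contDiff_ee.comp (by fun_prop))
  · intro x y t
    simp only [mul_add, ee_add]
    rw [mul_comm (ee (n * t)), ← mul_assoc]
    congr 1
    unfold Fs
    rw [← tsum_mul_right]
    simp only
    rw [← (Equiv.addRight n).tsum_eq (fun k : ℤ => g k (x + k / n) * ee (k * y))]
    congr 1
    ext k
    simp only [Equiv.coe_addRight, hg]
    rw [mul_assoc, ← ee_add]
    push_cast
    congr 2
    · field_simp; ring
    · ring
  · intro x y t
    simp only
    congr 1
    unfold Fs
    congr 1
    ext k
    simp [mul_add, ee_add, ee_int]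
  · intro x y t
    simp [mul_add, ee_add, ee_int]
  · intro x y t
    rw [((hasDerivAt_ee n t).const_mul (Fs n g (x, y))).deriv]
    push_cast
    ring
  · intro x y t
    rw [tsum_eq]

structure Q (n : ℤ) (F : ℝ × ℝ → ℂ) : Prop where
  sm : ContDiff ℝ (⊤ : ℕ∞) F
  per : ∀ x y, F (x, y + 1) = F (x, y)
  qp : ∀ x y, F (x + 1, y) = ee (-n * y) * F (x, y)

noncomputable def XX (F : ℝ × ℝ → ℂ) (p : ℝ × ℝ) : ℂ := deriv (fun s => F (s, p.2)) p.1
noncomputable def YY (n : ℤ) (F : ℝ × ℝ → ℂ) (p : ℝ × ℝ) : ℂ :=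
  deriv (fun s => F (p.1, s)) p.2 + 2 * Real.pi * Complex.I * n * p.1 * F p

lemma hX {F : ℝ × ℝ → ℂ} (hF : ContDiff ℝ (⊤ : ℕ∞) F) (x y : ℝ) :
    HasDerivAt (fun s => F (s, y)) (fderiv ℝ F (x, y) (1, 0)) x := by
  have h1 := (hF.differentiable (by simp) (x, y)).hasFDerivAt
  exact h1.comp_hasDerivAt x ((hasDerivAt_id x).prodMk (hasDerivAt_const x y))

lemma hY {F : ℝ × ℝ → ℂ} (hF : ContDiff ℝ (⊤ : ℕ∞) F) (x y : ℝ) :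
    HasDerivAt (fun s => F (x, s)) (fderiv ℝ F (x, y) (0, 1)) y := by
  have h1 := (hF.differentiable (by simp) (x, y)).hasFDerivAt
  exact h1.comp_hasDerivAt y ((hasDerivAt_const y x).prodMk (hasDerivAt_id y))

lemma contDiff_X {F : ℝ × ℝ → ℂ} (hF : ContDiff ℝ (⊤ : ℕ∞) F) :
    ContDiff ℝ (⊤ : ℕ∞) (XX F) := by
  have : XX F = fun p => fderiv ℝ F p (1, 0) := by
    ext ⟨x, y⟩; exact (hX hF x y).deriv
  rw [this]
  exact (hF.fderiv_right (by simp)).clm_apply contDiff_const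

lemma contDiff_Yd {F : ℝ × ℝ → ℂ} (hF : ContDiff ℝ (⊤ : ℕ∞) F) :
    ContDiff ℝ (⊤ : ℕ∞) (fun p : ℝ × ℝ => deriv (fun s => F (p.1, s)) p.2) := by
  have : (fun p : ℝ × ℝ => deriv (fun s => F (p.1, s)) p.2) = fun p => fderiv ℝ F p (0, 1) := by
    ext ⟨x, y⟩; exact (hY hF x y).deriv
  rw [this]
  exact (hF.fderiv_right (by simp)).clm_apply contDiff_const

lemma contDiff_Y (n : ℤ) {F : ℝ × ℝ → ℂ} (hF : ContDiff ℝ (⊤ : ℕ∞) F) :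
    ContDiff ℝ (⊤ : ℕ∞) (YY n F) := by
  have h0 : ContDiff ℝ (⊤ : ℕ∞) (fun p : ℝ × ℝ => (p.1 : ℂ)) :=
      Complex.ofRealCLM.contDiff.comp contDiff_fst
  exact (contDiff_Yd hF).add ((contDiff_const.mul h0).mul hF)

lemma Q.X {n : ℤ} {F : ℝ × ℝ → ℂ} (h : Q n F) : Q n (XX F) where
  sm := contDiff_X h.sm
  per x y := by simp [XX, h.per]
  qp x y := by
    simp only [XX]
    rw [← deriv_comp_add_const]
    simp only [h.qp]
    exact ((hX h.sm x y).differentiableAt.hasDerivAt.const_mul _).deriv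

lemma Q.Y {n : ℤ} {F : ℝ × ℝ → ℂ} (h : Q n F) : Q n (YY n F) where
  sm := contDiff_Y n h.sm
  per x y := by
    simp only [YY, h.per]
    rw [← deriv_comp_add_const]
    simp only [h.per]
  qp x y := by
    simp only [YY, h.qp]
    have hd : deriv (fun s => ee (-n * s) * F (x, s)) y = _ :=
      ((hasDerivAt_ee (-n) y).mul (hY h.sm x y).differentiableAt.hasDerivAt).deriv
    rw [hd]
    push_cast
    ring

lemma Q.bdd {n : ℤ} {F : ℝ × ℝ → ℂ} (h : Q n F) : ∃ C : ℝ, ∀ p, ‖F p‖ ≤ C := by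
  obtain ⟨C, hC⟩ := ((isCompact_Icc (a := (0 : ℝ)) (b := 1)).prod
    (isCompact_Icc (a := (0 : ℝ)) (b := 1))).exists_bound_of_continuousOn
      h.sm.continuous.continuousOn
  refine ⟨C, fun ⟨x, y⟩ => ?_⟩
  have hp1 : Function.Periodic (fun y => ‖F (x, y)‖) 1 := fun y => by simp [h.per]
  obtain ⟨y', hy', hy⟩ := hp1.exists_mem_Ico₀ one_pos y
  have hp2 : Function.Periodic (fun x => ‖F (x, y')‖) 1 := fun y => by simp [h.qp, norm_ee]
  obtain ⟨x', hx', hx⟩ := hp2.exists_mem_Ico₀ one_pos x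
  rw [hy, hx]
  exact hC _ ⟨⟨hx'.1, hx'.2.le⟩, ⟨hy'.1, hy'.2.le⟩⟩

noncomputable def cc (F : ℝ × ℝ → ℂ) (k : ℤ) (x : ℝ) : ℂ :=
  ∫ y in (0 : ℝ)..1, F (x, y) * ee (-k * y)

lemma cont_int {F : ℝ × ℝ → ℂ} (h : Continuous F) (k : ℤ) (x : ℝ) :
    Continuous fun y : ℝ => F (x, y) * ee (-k * y) :=
  (h.comp (by fun_prop)).mul (continuous_ee.comp (by fun_prop))

lemma Q.cc_bdd {n : ℤ} {F : ℝ × ℝ → ℂ} (h : Q n F) (k : ℤ) : ∃ C : ℝ, ∀ x, ‖cc F k x‖ ≤ C := by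
  obtain ⟨C, hC⟩ := h.bdd
  refine ⟨C, fun x => ?_⟩
  have := intervalIntegral.norm_integral_le_of_norm_le_const (a := 0) (b := 1) (C := C)
    (f := fun y : ℝ => F (x, y) * ee (-k * y)) (fun y _ => by simp [norm_ee, hC])
  simpa [cc] using this

lemma Q.cc_deriv {n : ℤ} {F : ℝ × ℝ → ℂ} (h : Q n F) (k : ℤ) (x : ℝ) :
    HasDerivAt (cc F k) (cc (XX F) k x) x := by
  obtain ⟨C, hC⟩ := h.X.bdd
  have hc := h.sm.continuous
  have hc' := h.X.sm.continuous
  refine (intervalIntegral.hasDerivAt_integral_of_dominated_loc_of_deriv_le (μ := volume)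
    (F := fun x y => F (x, y) * ee (-k * y)) (F' := fun x y => XX F (x, y) * ee (-k * y))
    (bound := fun _ => C) (s := Set.univ) Filter.univ_mem
    (Filter.Eventually.of_forall fun x => (cont_int hc k x).aestronglyMeasurable)
    ((cont_int hc k x).intervalIntegrable _ _) (cont_int hc' k x).aestronglyMeasurable
    (Filter.Eventually.of_forall fun y _ x _ => by simp [norm_ee, hC])
    intervalIntegrable_const (Filter.Eventually.of_forall fun y _ x _ => ?_)).2
  exact (hX h.sm x y).differentiableAt.hasDerivAt.mul_const _

lemma Q.cc_Y {n : ℤ} {F : ℝ × ℝ → ℂ} (h : Q n F) (k : ℤ) (x : ℝ) :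
    cc (YY n F) k x = 2 * Real.pi * Complex.I * (k + n * x) * cc F k x := by
  have hc := h.sm.continuous
  have hc' := (contDiff_Yd h.sm).continuous
  have hd : Continuous fun y => deriv (fun s => F (x, s)) y := hc'.comp (by fun_prop : Continuous fun y : ℝ => (x, y))
  have he : Continuous fun y : ℝ => ee (-k * y) := continuous_ee.comp (by fun_prop)
  have ibp := intervalIntegral.integral_mul_deriv_eq_deriv_mul (a := 0) (b := 1)
    (u := fun y : ℝ => ee (-k * y)) (v := fun y => F (x, y))
    (u' := fun y => 2 * Real.pi * Complex.I * ((-k : ℝ) : ℂ) * ee (-k * y))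
    (v' := fun y => deriv (fun s => F (x, s)) y)
    (fun y _ => hasDerivAt_ee (-k) y)
    (fun y _ => (hY h.sm x y).differentiableAt.hasDerivAt)
    ((continuous_const.mul he).intervalIntegrable _ _) (hd.intervalIntegrable _ _)
  have e1 : ee (-k * 1) = 1 := by have := ee_int (-k); push_cast at this; simpa using this
  have e2 : F (x, 1) = F (x, 0) := by simpa using h.per x 0
  simp only [e1, e2, mul_zero, ee_zero, sub_self, zero_sub] at ibp
  have hs : cc (YY n F) k x = (∫ y in (0 : ℝ)..1, ee (-k * y) * deriv (fun s => F (x, s)) y) +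
      2 * Real.pi * Complex.I * n * x * cc F k x := by
    unfold cc
    rw [← intervalIntegral.integral_const_mul, ← intervalIntegral.integral_add
      (f := fun y => ee (-k * y) * deriv (fun s => F (x, s)) y)
      (g := fun y => 2 * Real.pi * Complex.I * n * x * (F (x, y) * ee (-k * y)))
      ((he.mul hd).intervalIntegrable _ _)
      ((continuous_const.mul (cont_int hc k x)).intervalIntegrable _ _)]
    congr 1
    ext y
    simp only [YY]
    ring
  rw [hs, ibp]
  have : ∀ y : ℝ, 2 * Real.pi * Complex.I * ((-k : ℝ) : ℂ) * ee (-k * y) * F (x, y) =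
      (2 * Real.pi * Complex.I * ((-k : ℝ) : ℂ)) * (F (x, y) * ee (-k * y)) := fun y => by ring
  simp_rw [this]
  rw [intervalIntegral.integral_const_mul]
  change -(_ * cc F k x) + _ = _
  push_cast
  ring

lemma Q.cc_shift {n : ℤ} {F : ℝ × ℝ → ℂ} (h : Q n F) (k : ℤ) (x : ℝ) :
    cc F (k + n) x = cc F k (x + 1) := by
  unfold cc
  congr 1
  ext y
  rw [h.qp, mul_comm (ee _), mul_assoc, ← ee_add]
  push_cast
  ring_nf

noncomputable def gg (n : ℤ) (F : ℝ × ℝ → ℂ) (k : ℤ) (x : ℝ) : ℂ := cc F k (x - k / n)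

lemma Q.gg_deriv {n : ℤ} {F : ℝ × ℝ → ℂ} (h : Q n F) (k : ℤ) :
    deriv (gg n F k) = gg n (XX F) k := by
  ext x
  exact ((h.cc_deriv k (x - k / n)).comp_sub_const x (k / n : ℝ)).deriv

lemma Q.gg_diff {n : ℤ} {F : ℝ × ℝ → ℂ} (h : Q n F) (k : ℤ) :
    Differentiable ℝ (gg n F k) := fun x =>
  ((h.cc_deriv k (x - k / n)).comp_sub_const x (k / n : ℝ)).differentiableAt

lemma Q.gg_Y {n : ℤ} (hn : n ≠ 0) {F : ℝ × ℝ → ℂ} (h : Q n F) (k : ℤ) (x : ℝ) :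
    gg n (YY n F) k x = 2 * Real.pi * Complex.I * n * x * gg n F k x := by
  have hn' : (n : ℂ) ≠ 0 := by exact_mod_cast hn
  unfold gg
  rw [h.cc_Y]
  push_cast
  field_simp
  ring

lemma Q.gg_iter (n : ℤ) (j : ℕ) : ∀ {F : ℝ × ℝ → ℂ}, Q n F → ∀ k : ℤ,
    ∃ G, Q n G ∧ iteratedDeriv j (gg n F k) = gg n G k := by
  induction j with
  | zero => exact fun {F} h k => ⟨F, h, by simp⟩
  | succ j ih =>
    intro F h k
    rw [iteratedDeriv_succ', h.gg_deriv]
    exact ih h.X k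

lemma Q.gg_decay {n : ℤ} (hn : n ≠ 0) (m : ℕ) : ∀ {F : ℝ × ℝ → ℂ}, Q n F → ∀ k : ℤ,
    ∃ C : ℝ, ∀ x : ℝ, |x| ^ m * ‖gg n F k x‖ ≤ C := by
  induction m with
  | zero =>
    intro F h k
    obtain ⟨C, hC⟩ := h.cc_bdd k
    exact ⟨C, fun x => by simpa [gg] using hC _⟩
  | succ m ih =>
    intro F h k
    obtain ⟨C, hC⟩ := ih h.Y k
    have hpos : 0 < 2 * Real.pi * |(n : ℝ)| := by
      have : (n : ℝ) ≠ 0 := by exact_mod_cast hn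
      positivity
    refine ⟨C / (2 * Real.pi * |(n : ℝ)|), fun x => ?_⟩
    rw [le_div_iff₀ hpos]
    refine le_trans (le_of_eq ?_) (hC x)
    rw [h.gg_Y hn]
    simp only [norm_mul, Complex.norm_I, Complex.norm_intCast,
        Complex.norm_real, Complex.norm_ofNat, Real.norm_of_nonneg Real.pi_pos.le, Real.norm_eq_abs]
    ring

lemma Q.gg_contDiff {n : ℤ} (m : ℕ) : ∀ {F : ℝ × ℝ → ℂ}, Q n F → ∀ k : ℤ,
    ContDiff ℝ m (gg n F k) := by
  induction m with
  | zero =>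
    intro F h k
    rw [Nat.cast_zero, contDiff_zero]
    exact (h.gg_diff k).continuous
  | succ m ih =>
    intro F h k
    rw [Nat.cast_succ, contDiff_succ_iff_deriv]
    refine ⟨h.gg_diff k, by simp, ?_⟩
    rw [h.gg_deriv]
    exact ih h.X k

noncomputable def sg {n : ℤ} (hn : n ≠ 0) {F : ℝ × ℝ → ℂ} (h : Q n F) (k : ℤ) :
    SchwartzMap ℝ ℂ where
  toFun := gg n F k
  smooth' := contDiff_infty.2 fun m => Q.gg_contDiff m h k
  decay' := fun m j => by
    obtain ⟨G, hG, e⟩ := Q.gg_iter n j h k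
    obtain ⟨C, hC⟩ := Q.gg_decay hn m hG k
    refine ⟨C, fun x => ?_⟩
    rw [norm_iteratedFDeriv_eq_norm_iteratedDeriv, e]
    exact hC x

lemma sg_apply {n : ℤ} (hn : n ≠ 0) {F : ℝ × ℝ → ℂ} (h : Q n F) (k : ℤ) (x : ℝ) :
    sg hn h k x = cc F k (x - k / n) := rfl

lemma sg_per {n : ℤ} (hn : n ≠ 0) {F : ℝ × ℝ → ℂ} (h : Q n F) (k : ℤ) :
    sg hn h (k + n) = sg hn h k := by
  have hn' : (n : ℝ) ≠ 0 := by exact_mod_cast hn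
  ext x
  rw [sg_apply, sg_apply, h.cc_shift]
  congr 1
  push_cast
  field_simp
  ring

lemma Fs_sg {n : ℤ} (hn : n ≠ 0) {F : ℝ × ℝ → ℂ} (h : Q n F) (x y : ℝ) :
    Fs n (sg hn h) (x, y) = F (x, y) := by
  have hper : Function.Periodic (fun y => F (x, y)) 1 := fun y => h.per x y
  have hcy : Continuous fun y => F (x, y) := h.sm.continuous.comp (by fun_prop)
  have : Fact ((0 : ℝ) < 1) := ⟨one_pos⟩
  let φ : C(AddCircle (1 : ℝ), ℂ) := ⟨hper.lift, by
    exact continuous_coinduced_dom.mpr hcy⟩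
  have hφ : ∀ y : ℝ, φ y = F (x, y) := fun y => hper.lift_coe y
  have hco : ∀ k, fourierCoeff φ k = sg hn h k (x + k / n) := by
    intro k
    rw [fourierCoeff_eq_intervalIntegral φ k 0, sg_apply, add_sub_cancel_right]
    simp only [zero_add, one_div, inv_one, one_smul, cc]
    congr 1
    ext y
    rw [hφ, fourier_coe_apply, smul_eq_mul, mul_comm]
    congr 1
    unfold ee
    push_cast
    congr 1
    ring
  have hsum : Summable (fourierCoeff φ) := by
    rw [show fourierCoeff φ = _ from funext hco]
    exact (summ_g hn (sg_per hn h) x).of_norm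
  have := (has_pointwise_sum_fourier_series_of_summable hsum (y : AddCircle (1 : ℝ))).tsum_eq
  rw [hφ] at this
  rw [← this]
  unfold Fs
  congr 1
  ext k
  rw [hco, fourier_coe_apply, smul_eq_mul]
  congr 1
  unfold ee
  push_cast
  congr 1
  ring

lemma int_ee (j : ℤ) : ∫ y in (0 : ℝ)..1, ee (j * y) = if j = 0 then 1 else 0 := by
  split_ifs with hj
  · simp [hj, ee_zero]
  · have hne : (2 * Real.pi * Complex.I * j : ℂ) ≠ 0 := by
      have : (j : ℂ) ≠ 0 := by exact_mod_cast hj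
      simp [Real.pi_ne_zero, this]
    have h1 := intervalIntegral.integral_eq_sub_of_hasDerivAt (a := 0) (b := 1)
      (f := fun y : ℝ => ee (j * y)) (f' := fun y => 2 * Real.pi * Complex.I * ((j : ℝ) : ℂ) * ee (j * y))
      (fun y _ => hasDerivAt_ee j y)
      ((continuous_const.mul (continuous_ee.comp (by fun_prop))).intervalIntegrable _ _)
    rw [intervalIntegral.integral_const_mul] at h1
    simp only [mul_one, mul_zero, ee_zero, ee_int, sub_self, mul_eq_zero] at h1
    rcases h1 with h1 | h1
    · exact absurd (by simpa using h1) hne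
    · exact h1

lemma uniq {n : ℤ} (hn : n ≠ 0) {g : ℤ → SchwartzMap ℝ ℂ} (hg : ∀ k : ℤ, g (k + n) = g k)
    (k : ℤ) (x : ℝ) : g k (x + k / n) = cc (Fs n g) k x := by
  have hcont : ∀ j : ℤ, Continuous fun y : ℝ => g j (x + j / n) * ee (j * y) * ee (-k * y) :=
    fun j => (continuous_const.mul (continuous_ee.comp (by fun_prop))).mul
      (continuous_ee.comp (by fun_prop))
  have hs := intervalIntegral.hasSum_integral_of_dominated_convergence (μ := volume) (a := 0) (b := 1)
    (F := fun (j : ℤ) (y : ℝ) => g j (x + j / n) * ee (j * y) * ee (-k * y))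
    (f := fun y => Fs n g (x, y) * ee (-k * y))
    (fun j _ => ‖g j (x + j / n)‖) (fun j => (hcont j).aestronglyMeasurable)
    (fun j => Filter.Eventually.of_forall fun y _ => by simp [norm_ee])
    (Filter.Eventually.of_forall fun y _ => summ_g hn hg x)
    intervalIntegrable_const
    (Filter.Eventually.of_forall fun y _ => (summ_gee hn hg x y).hasSum.mul_right _)
  have hi : ∀ j : ℤ, ∫ y in (0 : ℝ)..1, g j (x + j / n) * ee (j * y) * ee (-k * y) =
      if j = k then g k (x + k / n) else 0 := by
    intro j
    have : ∀ y : ℝ, g j (x + j / n) * ee (j * y) * ee (-k * y) =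
        g j (x + j / n) * ee (((j - k : ℤ) : ℝ) * y) := by
      intro y
      rw [mul_assoc, ← ee_add]
      push_cast
      ring_nf
    simp_rw [this]
    rw [intervalIntegral.integral_const_mul, int_ee]
    by_cases hjk : j = k
    · simp [hjk]
    · simp [hjk, sub_eq_zero]
  simp_rw [hi] at hs
  exact (hasSum_ite_eq k (g k (x + k / n))).unique hs

lemma ode {f : ℝ → ℂ} (hf : Differentiable ℝ f) (n : ℤ)
    (h : ∀ t, deriv f t = 2 * Real.pi * Complex.I * n * f t) (t : ℝ) : f t = f 0 * ee (n * t) := by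
  have hd : ∀ s, HasDerivAt (fun s => f s * ee (-n * s)) 0 s := by
    intro s
    have h1 := (hf s).hasDerivAt.mul (hasDerivAt_ee (-n) s)
    rw [h] at h1
    refine h1.congr_deriv ?_
    push_cast
    ring
  have := is_const_of_deriv_eq_zero (fun s => (hd s).differentiableAt) (fun s => (hd s).deriv) t 0
  simp only [mul_zero, ee_zero, mul_one] at this
  rw [← this, mul_assoc, ← ee_add]
  simp [ee_zero]

theorem partA (n : ℤ) (hn : n ≠ 0) (f : ℝ × ℝ × ℝ → ℂ) (hf : ContDiff ℝ (⊤ : ℕ∞) f)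
    (h1 : ∀ x y t : ℝ, f (x + 1, y, t + y) = f (x, y, t))
    (h2 : ∀ x y t : ℝ, f (x, y + 1, t) = f (x, y, t))
    (h4 : ∀ x y t : ℝ, deriv (fun s => f (x, y, s)) t =
        2 * Real.pi * Complex.I * n * f (x, y, t)) :
      ∃! g : ℤ → SchwartzMap ℝ ℂ, (∀ k : ℤ, g (k + n) = g k) ∧
        ∀ x y t : ℝ, f (x, y, t) =
          ∑' k : ℤ, g k (x + k / n) * Complex.exp (2 * Real.pi * Complex.I * (k * y + n * t)) := by
  have hn' : (n : ℝ) ≠ 0 := by exact_mod_cast hn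
  have ho : ∀ x y t : ℝ, f (x, y, t) = f (x, y, 0) * ee (n * t) := fun x y t =>
    ode (f := fun s => f (x, y, s))
      ((hf.differentiable (by simp)).comp (by fun_prop : Differentiable ℝ fun s : ℝ => (x, y, s)))
      n (h4 x y) t
  have hQ : Q n (fun p => f (p.1, p.2, 0)) := by
    refine ⟨hf.comp (by fun_prop), fun x y => h2 x y 0, fun x y => ?_⟩
    have := h1 x y 0
    rw [ho] at this
    simp only
    rw [← this, zero_add, mul_comm, mul_assoc, ← ee_add]
    simp [ee_zero]
  refine ⟨sg hn hQ, ⟨sg_per hn hQ, fun x y t => ?_⟩, ?_⟩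
  · rw [tsum_eq, Fs_sg, ho]
  · rintro g ⟨hg, hfg⟩
    have hF : Fs n g = fun p => f (p.1, p.2, 0) := by
      ext ⟨x, y⟩
      have := hfg x y 0
      rw [tsum_eq] at this
      simp [this, ee_zero]
    ext k x
    have := uniq hn hg k (x - k / n)
    rw [sub_add_cancel] at this
    rw [this, hF, sg_apply]

end WBZ

open SchwartzMap in
/-- Weil–Brezin–Zak transform: a smooth function on the Heisenberg nilmanifold
`M₃ = H₃(ℤ)\H₃(ℝ)` of weight `n ≠ 0` under `(2πi)^{-1}∂_t` admits a unique expansion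
`f(x,y,t) = Σ_k f̃(x+k/n; k) e^{2πi(ky+nt)}` with `f̃` Schwartz on `ℝ×ℤ/nℤ`
(i.e. `n`-periodic in `k`), and conversely every such Schwartz `f̃` arises this way. -/
theorem stmt7 (n : ℤ) (hn : n ≠ 0) :
    (∀ f : ℝ × ℝ × ℝ → ℂ, ContDiff ℝ (⊤ : ℕ∞) f →
      (∀ x y t : ℝ, f (x + 1, y, t + y) = f (x, y, t)) →
      (∀ x y t : ℝ, f (x, y + 1, t) = f (x, y, t)) →
      (∀ x y t : ℝ, f (x, y, t + 1) = f (x, y, t)) →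
      (∀ x y t : ℝ, deriv (fun s => f (x, y, s)) t =
        2 * Real.pi * Complex.I * n * f (x, y, t)) →
      ∃! g : ℤ → SchwartzMap ℝ ℂ, (∀ k : ℤ, g (k + n) = g k) ∧
        ∀ x y t : ℝ, f (x, y, t) =
          ∑' k : ℤ, g k (x + k / n) * Complex.exp (2 * Real.pi * Complex.I * (k * y + n * t)))
    ∧
    (∀ g : ℤ → SchwartzMap ℝ ℂ, (∀ k : ℤ, g (k + n) = g k) →
      ∃ f : ℝ × ℝ × ℝ → ℂ, ContDiff ℝ (⊤ : ℕ∞) f ∧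
        (∀ x y t : ℝ, f (x + 1, y, t + y) = f (x, y, t)) ∧
        (∀ x y t : ℝ, f (x, y + 1, t) = f (x, y, t)) ∧
        (∀ x y t : ℝ, f (x, y, t + 1) = f (x, y, t)) ∧
        (∀ x y t : ℝ, deriv (fun s => f (x, y, s)) t =
          2 * Real.pi * Complex.I * n * f (x, y, t)) ∧
        ∀ x y t : ℝ, f (x, y, t) =
          ∑' k : ℤ, g k (x + k / n) * Complex.exp (2 * Real.pi * Complex.I * (k * y + n * t))) := by
  exact ⟨fun f hf h1 h2 _ h4 => WBZ.partA n hn f hf h1 h2 h4, fun g hg => WBZ.partB n hn g hg⟩
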